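/- (Lemma 3) Suppose (g_n^*) is an optimal configuration with overall channel h^* and h^* ≠ 0. If for some element n we have v_n ≠ 0 and ang(h^*, F_{n,i}) ≥ π/2 for every index i ∈ {1,…,K}, then g_n^* = 0, i.e., element n is turned off in the optimal configuration. -/

import Mathlib

/-- The angle in `[0,π]` between two nonzero complex numbers regarded as plane vectors:
`ang a b = arccos (Re (a * conj b) / (|a| * |b|))`. -/
noncomputable def ang (a b : ℂ) : ℝ :=
  Real.arccos ((a * (starRingEnd ℂ) b).re / (‖a‖ * ‖b‖))

open scoped RealInnerProductSpace

theorem sum_update_eq_sub_add {ι M : Type*} [DecidableEq ι] [AddCommGroup M] {s : Finset ι} {i : ι}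
    (hi : i ∈ s) (f : ι → M) (b : M) :
    ∑ j ∈ s, Function.update f i b j = ∑ j ∈ s, f j - f i + b := by
  rw [Finset.sum_update_of_mem hi, Finset.sum_eq_add_sum_sdiff_singleton_of_mem hi f]
  abel

section InnerProductSpace

variable {E : Type*} [NormedAddCommGroup E] [InnerProductSpace ℝ E]

theorem pi_div_two_le_angle_iff_inner_nonpos {x y : E} :
    Real.pi / 2 ≤ InnerProductGeometry.angle x y ↔ ⟪x, y⟫ ≤ 0 := by
  obtain rfl | hx := eq_or_ne x 0
  · simp
  obtain rfl | hy := eq_or_ne y 0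
  · simp
  have norm_mul_pos : 0 < ‖x‖ * ‖y‖ := by positivity
  rw [InnerProductGeometry.angle, ← not_lt, Real.arccos_lt_pi_div_two,
    div_pos_iff_of_pos_right norm_mul_pos, not_lt]

theorem eq_zero_of_norm_sub_le_of_inner_nonpos {x y : E} (hnorm : ‖x - y‖ ≤ ‖x‖)
    (hinner : ⟪x, y⟫ ≤ 0) : y = 0 := by
  have norm_sq_le : ‖x‖ ^ 2 - 2 * ⟪x, y⟫ + ‖y‖ ^ 2 ≤ ‖x‖ ^ 2 := by
    rw [← norm_sub_sq_real]
    gcongr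
  have norm_sq_nonpos : ‖y‖ ^ 2 ≤ 0 := by linarith
  simpa using norm_sq_nonpos.antisymm (sq_nonneg _)

/-- Switching element `n` off turns the overall channel `h` into `h - g n`, which is strictly
longer than `h` unless `g n = 0`. -/
theorem stmt_4_general {ι : Type*} [Fintype ι] {A : ι → Set E} {h_d : E} {g : ι → E}
    (hg : ∀ m, g m ∈ A m)
    (hopt : ∀ g' : ι → E, (∀ m, g' m ∈ A m) → ‖h_d + ∑ m, g' m‖ ≤ ‖h_d + ∑ m, g m‖)
    {n : ι} (hoff : 0 ∈ A n) (hinner : ⟪h_d + ∑ m, g m, g n⟫ ≤ 0) :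
    g n = 0 := by
  classical
  have update_mem : ∀ m, Function.update g n 0 m ∈ A m :=
    (Function.forall_update_iff g fun m z ↦ z ∈ A m).2 ⟨hoff, fun m _ ↦ hg m⟩
  have norm_sub_le : ‖h_d + ∑ m, g m - g n‖ ≤ ‖h_d + ∑ m, g m‖ := by
    simpa only [sum_update_eq_sub_add (Finset.mem_univ n), add_zero, add_sub_assoc]
      using hopt _ update_mem
  exact eq_zero_of_norm_sub_le_of_inner_nonpos norm_sub_le hinner

end InnerProductSpace

theorem ang_eq_angle (a b : ℂ) : ang a b = InnerProductGeometry.angle a b := by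
  rw [ang, InnerProductGeometry.angle, real_inner_comm, Complex.inner]

/-- Lemma 3: if every `F n i` makes an angle `≥ π/2` with the optimal overall channel `h^*`,
then element `n` is turned off in the optimal configuration. -/
theorem stmt_4
    {N K : ℕ} (hN : 0 < N) (hK : 0 < K)
    (h_d : ℂ) (v : Fin N → ℂ) (φ : Fin K → ℝ)
    (hφinj : Function.Injective φ)
    (hφrange : ∀ i, 0 ≤ φ i ∧ φ i < 2 * Real.pi)
    (F : Fin N → Fin K → ℂ)
    (hF : ∀ m i, F m i = v m * Complex.exp ((φ i : ℂ) * Complex.I))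
    (g : Fin N → ℂ)
    (hg : ∀ m, g m = 0 ∨ ∃ i, g m = F m i)
    (hopt : ∀ g' : Fin N → ℂ, (∀ m, g' m = 0 ∨ ∃ i, g' m = F m i) →
      ‖h_d + ∑ m, g' m‖ ≤ ‖h_d + ∑ m, g m‖)
    (hstar : h_d + ∑ m, g m ≠ 0)
    (n : Fin N) (hvn : v n ≠ 0)
    (hang : ∀ i, Real.pi / 2 ≤ ang (h_d + ∑ m, g m) (F n i)) :
    g n = 0 := by
  refine (hg n).elim id fun ⟨i, hi⟩ ↦
    stmt_4_general (A := fun m ↦ {z | z = 0 ∨ ∃ i, z = F m i}) hg hopt (.inl rfl) ?_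
  rw [hi, ← pi_div_two_le_angle_iff_inner_nonpos, ← ang_eq_angle]
  exact hang i
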